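/- arXiv:2408.14238 — 10 statements merged into one kernel-verified Lean document; each statement's English description precedes it below -/
import Mathlib

section
/- For every natural number n with n ≥ r₊, the following chain of inequalities holds: log(log₂(1 + r₊)) ≤ log(r₊) ≤ −s(v₊) + log( Σ_{v ∈ I, r(v) ≤ n} exp(s(v)) ). In other words, minimizing the truncated cross-entropy loss ℓ_{CE-n} := −s(v₊) + log Σ_{r(v) ≤ n} exp(s(v)) maximizes a lower bound of both NDCG(r₊) = 1/log₂(1+r₊) and MRR(r₊) = 1/r₊ whenever n ≥ r₊. -/
/-!
The first inequality is `1 + r₊ ≤ 2 ^ r₊`. For the second, each of the `r₊` items scoring at least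
`s v₊` has rank at most `r₊ ≤ n`, because `r` is antitone in the score. All of them therefore occur
in the truncated sum, each contributing at least `exp (s v₊)`, so `r₊ * exp (s v₊)` is at most the
sum, and the claim follows on taking logarithms.
-/

/-- For every natural number `n` with `n ≥ r₊`, we have
`log (log₂ (1 + r₊)) ≤ log r₊ ≤ -s v₊ + log (∑_{v : r v ≤ n} exp (s v))`,
where `r v = |{u : s u ≥ s v}|` and `r₊ = r v₊`. -/
theorem truncated_CE_bounds_NDCG_MRR
    {I : Type*} [Fintype I] [Nonempty I]
    (s : I → ℝ) (vplus : I)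
    (r : I → ℕ) (hr : ∀ v, r v = ({u : I | s u ≥ s v} : Set I).ncard)
    (n : ℕ) (hn : r vplus ≤ n) :
    Real.log (Real.logb 2 (1 + (r vplus : ℝ))) ≤ Real.log (r vplus) ∧
    Real.log (r vplus) ≤
      -s vplus +
        Real.log (∑ v ∈ Finset.univ.filter (fun v => r v ≤ n), Real.exp (s v)) := by
  classical
  have hpos : 0 < r vplus := by
    rw [hr, Set.ncard_pos]
    exact ⟨vplus, le_refl (s vplus)⟩
  have hposR : (0 : ℝ) < r vplus := by exact_mod_cast hpos
  constructor
  · apply Real.log_le_log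
    · exact Real.logb_pos (by norm_num) (by linarith)
    · rw [Real.logb_le_iff_le_rpow (by norm_num) (by linarith), Real.rpow_natCast]
      have h : 1 + r vplus ≤ 2 ^ r vplus := by
        have := Nat.lt_two_pow_self (n := r vplus)
        omega
      exact_mod_cast h
  · have hcard : r vplus = (Finset.univ.filter (fun u => s vplus ≤ s u)).card := by
      rw [hr, ← Set.ncard_coe_finset]
      simp
    have hsub : Finset.univ.filter (fun u => s vplus ≤ s u) ⊆
        Finset.univ.filter (fun v => r v ≤ n) := by
      intro v hv
      simp only [Finset.mem_filter, Finset.mem_univ, true_and] at hv ⊢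
      refine le_trans ?_ hn
      rw [hr, hr]
      exact Set.ncard_le_ncard (fun u hu => le_trans hv hu) (Set.toFinite _)
    have hsum : (r vplus : ℝ) * Real.exp (s vplus) ≤
        ∑ v ∈ Finset.univ.filter (fun v => r v ≤ n), Real.exp (s v) := by
      calc (r vplus : ℝ) * Real.exp (s vplus)
          = ∑ _v ∈ Finset.univ.filter (fun u => s vplus ≤ s u), Real.exp (s vplus) := by
            rw [Finset.sum_const, nsmul_eq_mul, ← hcard]
        _ ≤ ∑ v ∈ Finset.univ.filter (fun u => s vplus ≤ s u), Real.exp (s v) :=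
            Finset.sum_le_sum fun v hv => Real.exp_le_exp.mpr (Finset.mem_filter.mp hv).2
        _ ≤ _ := Finset.sum_le_sum_of_subset_of_nonneg hsub fun v _ _ => (Real.exp_pos _).le
    have hlog := Real.log_le_log (mul_pos hposR (Real.exp_pos _)) hsum
    rw [Real.log_mul hposR.ne' (Real.exp_pos _).ne', Real.log_exp] at hlog
    linarith
end

section
/- The cross-entropy loss bounds the negative logarithms of NDCG and MRR: log(log₂(1 + r₊)) ≤ log(r₊) ≤ ℓ_CE, where ℓ_CE := −s(v₊) + log( Σ_{v ∈ I} exp(s(v)) ). Hence minimizing the cross-entropy loss is equivalent to maximizing a lower bound of NDCG and MRR. -/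
/-!
The first inequality is `1 + r ≤ 2 ^ r` after taking `log₂` and then `log`. For the second, each of
the `r₊` items counted by the rank contributes at least `exp (s v₊)` to `∑ exp (s v)`, so
`r₊ * exp (s v₊) ≤ ∑ exp (s v)`; taking logarithms gives the claim.
-/

/-- The cross-entropy loss bounds the negative logs of NDCG and MRR:
`log (log₂ (1 + r₊)) ≤ log r₊ ≤ ℓ_CE = -s v₊ + log (∑_{v ∈ I} exp (s v))`. -/
theorem CE_bounds_NDCG_MRR
    {I : Type*} [Fintype I] [Nonempty I]
    (s : I → ℝ) (vplus : I)
    (rplus : ℕ) (hr : rplus = ({u : I | s u ≥ s vplus} : Set I).ncard) :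
    Real.log (Real.logb 2 (1 + (rplus : ℝ))) ≤ Real.log (rplus : ℝ) ∧
    Real.log (rplus : ℝ) ≤
      -s vplus + Real.log (∑ v : I, Real.exp (s v)) := by
  classical
  -- The target item is counted in its own rank.
  have hpos : 0 < rplus := by
    rw [hr, Set.ncard_pos (Set.toFinite _)]
    exact ⟨vplus, le_refl (s vplus)⟩
  have hposR : (0 : ℝ) < rplus := by exact_mod_cast hpos
  constructor
  · apply Real.log_le_log
    · exact Real.logb_pos (by norm_num) (by linarith)
    · rw [Real.logb_le_iff_le_rpow (by norm_num) (by linarith), Real.rpow_natCast]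
      have h : 1 + rplus ≤ 2 ^ rplus := by
        have := Nat.lt_two_pow_self (n := rplus)
        omega
      exact_mod_cast h
  · have hcard : rplus = (Finset.univ.filter fun u => s u ≥ s vplus).card := by
      rw [hr, ← Set.ncard_coe_finset]
      simp
    have hsum : (rplus : ℝ) * Real.exp (s vplus) ≤ ∑ v : I, Real.exp (s v) := by
      calc (rplus : ℝ) * Real.exp (s vplus)
          = ∑ _v ∈ Finset.univ.filter (fun u => s u ≥ s vplus), Real.exp (s vplus) := by
            rw [Finset.sum_const, nsmul_eq_mul, hcard]
        _ ≤ ∑ v ∈ Finset.univ.filter (fun u => s u ≥ s vplus), Real.exp (s v) :=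
            Finset.sum_le_sum fun v hv => Real.exp_le_exp.mpr (Finset.mem_filter.mp hv).2
        _ ≤ ∑ v : I, Real.exp (s v) :=
            Finset.sum_le_sum_of_subset_of_nonneg (Finset.filter_subset _ _)
              fun v _ _ => (Real.exp_pos _).le
    have hlog := Real.log_le_log (mul_pos hposR (Real.exp_pos (s vplus))) hsum
    rw [Real.log_mul hposR.ne' (Real.exp_pos _).ne', Real.log_exp] at hlog
    linarith
end

section
/- For every real η ≥ 0, the η-truncated cross-entropy loss ℓ_{CE-η} := −s(v₊) + log( Σ_{v ∈ I : s(v) − s(v₊) ≥ −η·|s(v₊)|} exp(s(v)) ) satisfies log(log₂(1 + r₊)) ≤ log(r₊) ≤ ℓ_{CE-η}; that is, the adaptive score-threshold truncation always retains enough items that the truncated loss remains an upper bound on −log NDCG(r₊) and −log MRR(r₊). -/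
/-!
The left inequality is `1 + r ≤ 2 ^ r` after taking `logb 2` and then `log`, which is legitimate
since `r₊ ≥ 1`. For the right one, `-η * |s v₊| ≤ 0`, so every item counted by `r₊` survives the
truncation; each contributes at least `exp (s v₊)`, hence `r₊ * exp (s v₊)` is at most the
truncated sum, and taking logarithms gives the bound.
-/

/-- For every real `η ≥ 0`, the η-truncated cross-entropy loss
`ℓ_{CE-η} := -s v₊ + log (∑_{v : s v - s v₊ ≥ -η * |s v₊|} exp (s v))` satisfies
`log (log₂ (1 + r₊)) ≤ log r₊ ≤ ℓ_{CE-η}`. -/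
theorem eta_truncated_CE_bounds_NDCG_MRR
    {I : Type*} [Fintype I] [Nonempty I]
    (s : I → ℝ) (vplus : I)
    (rplus : ℕ) (hr : rplus = ({u : I | s u ≥ s vplus} : Set I).ncard)
    (η : ℝ) (hη : 0 ≤ η) :
    Real.log (Real.logb 2 (1 + (rplus : ℝ))) ≤ Real.log (rplus : ℝ) ∧
    Real.log (rplus : ℝ) ≤
      -s vplus +
        Real.log (∑ v ∈ Finset.univ.filter (fun v => s v - s vplus ≥ -η * |s vplus|),
          Real.exp (s v)) := by
  classical
  have hcard : rplus = (Finset.univ.filter (fun u => s u ≥ s vplus)).card := by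
    rw [hr, ← Set.ncard_coe_finset]
    congr 1
    ext u
    simp
  have hpos : 0 < rplus := by
    rw [hcard]
    exact Finset.card_pos.mpr ⟨vplus, by simp⟩
  have hpos' : (0 : ℝ) < rplus := by exact_mod_cast hpos
  constructor
  · apply Real.log_le_log
    · exact Real.logb_pos (by norm_num) (by linarith)
    · rw [Real.logb_le_iff_le_rpow (by norm_num) (by linarith), Real.rpow_natCast]
      have h : 1 + rplus ≤ 2 ^ rplus := by
        have := Nat.lt_two_pow_self (n := rplus)
        omega
      exact_mod_cast h
  · have hthr : -η * |s vplus| ≤ 0 := by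
      have := mul_nonneg hη (abs_nonneg (s vplus))
      linarith
    have hsum : (rplus : ℝ) * Real.exp (s vplus) ≤
        ∑ v ∈ Finset.univ.filter (fun v => s v - s vplus ≥ -η * |s vplus|), Real.exp (s v) := by
      calc (rplus : ℝ) * Real.exp (s vplus)
          = ∑ _v ∈ Finset.univ.filter (fun u => s u ≥ s vplus), Real.exp (s vplus) := by
            rw [Finset.sum_const, nsmul_eq_mul, ← hcard]
        _ ≤ ∑ v ∈ Finset.univ.filter (fun u => s u ≥ s vplus), Real.exp (s v) :=
            Finset.sum_le_sum fun v hv => Real.exp_le_exp.mpr (Finset.mem_filter.mp hv).2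
        _ ≤ _ := by
            refine Finset.sum_le_sum_of_subset_of_nonneg (fun v hv => ?_)
              fun v _ _ => (Real.exp_pos _).le
            have := (Finset.mem_filter.mp hv).2
            exact Finset.mem_filter.mpr ⟨Finset.mem_univ v, by linarith⟩
    have hlog := Real.log_le_log (mul_pos hpos' (Real.exp_pos _)) hsum
    rw [Real.log_mul hpos'.ne' (Real.exp_pos _).ne', Real.log_exp] at hlog
    linarith
end

section
/- For any real numbers s₊ and t(1), …, t(K), and any real α > 0, letting ξ := |{i ∈ {1,…,K} : t(i) ≥ s₊}| denote the number of sampled scores not lower than the target score, the scaled cross-entropy loss satisfies −s₊ + log( exp(s₊) + α·Σ_{i=1}^K exp(t(i)) ) ≥ log(1 + α·ξ). -/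
/-!
Each sampled score `t i ≥ s₊` satisfies `exp (t i) ≥ exp s₊`, so
`exp s₊ + α * ∑ i, exp (t i) ≥ exp s₊ * (1 + α * ξ)`. Taking logarithms and subtracting `s₊`
gives the bound.
-/

/-- For any reals `s₊`, `t 1, …, t K` and any `α > 0`, letting
`ξ := |{i : t i ≥ s₊}|`, the scaled cross-entropy loss satisfies
`-s₊ + log (exp s₊ + α * ∑ i, exp (t i)) ≥ log (1 + α * ξ)`. -/
theorem SCE_ge_log_one_add_alpha_xi
    (K : ℕ) (splus : ℝ) (t : Fin K → ℝ) (α : ℝ) (hα : 0 < α)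
    (ξ : ℕ) (hξ : ξ = (Finset.univ.filter (fun i : Fin K => t i ≥ splus)).card) :
    Real.log (1 + α * (ξ : ℝ)) ≤
      -splus + Real.log (Real.exp splus + α * ∑ i : Fin K, Real.exp (t i)) := by
  -- The terms with `t i < splus` are positive and can be dropped.
  have hsum : (ξ : ℝ) * Real.exp splus ≤ ∑ i : Fin K, Real.exp (t i) := by
    calc (ξ : ℝ) * Real.exp splus
        = ∑ i ∈ Finset.univ.filter (fun i : Fin K => t i ≥ splus), Real.exp splus := by
          rw [Finset.sum_const, nsmul_eq_mul, hξ]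
      _ ≤ ∑ i ∈ Finset.univ.filter (fun i : Fin K => t i ≥ splus), Real.exp (t i) :=
          Finset.sum_le_sum fun i hi => Real.exp_le_exp.mpr (Finset.mem_filter.mp hi).2
      _ ≤ ∑ i : Fin K, Real.exp (t i) :=
          Finset.sum_le_sum_of_subset_of_nonneg (Finset.filter_subset _ _)
            fun i _ _ => (Real.exp_pos _).le
  have hpos : 0 < 1 + α * (ξ : ℝ) := by positivity
  have hlog : Real.log (Real.exp splus * (1 + α * (ξ : ℝ))) ≤
      Real.log (Real.exp splus + α * ∑ i : Fin K, Real.exp (t i)) := by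
    apply Real.log_le_log (mul_pos (Real.exp_pos _) hpos)
    linarith [mul_le_mul_of_nonneg_left hsum hα.le]
  rw [Real.log_mul (Real.exp_pos _).ne' hpos.ne', Real.log_exp] at hlog
  linarith
end

section
/- Let ξ be a binomial random variable with K trials and success probability p ∈ [0,1]. Then for every natural number m with 1 ≤ m ≤ K, P(ξ ≥ m) ≥ 1 − m·(1 − p)^{⌊K/m⌋}. -/
/-!
Write `q = 1 - p` and let `S K m = ∑_{k < m} C(K,k) p^k q^(K-k)` be the lower tail `P(ξ < m)`.
Split the `K` trials into `m` blocks of length `d = ⌊K/m⌋` (plus a remainder): fewer than `m`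
successes force some block to contain no success, and each block does so with probability `q^d`.

Analytically, removing one block is the inequality `S (K+d) (m+1) ≤ S K m + q^d`
(`lowerTail_add_le`), which follows by induction on `d` from Pascal's recursion
`S (K+1) (m+1) = p S K m + q S K (m+1)`. Iterating it over the blocks gives
`S K m ≤ m q^d` whenever `m d ≤ K` (`lowerTail_le`). The measure-theoretic part uses only
finite subadditivity, so `ξ` need not be measurable.
-/

/-- The probability that a binomial variable with `K` trials and success probability `p` takes
the value `k`. -/
noncomputable def binomWeight (p : ℝ) (K k : ℕ) : ℝ :=
  (K.choose k : ℝ) * p ^ k * (1 - p) ^ (K - k)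

/-- The probability that a binomial variable with `K` trials is strictly less than `m`. -/
noncomputable def lowerTail (p : ℝ) (K m : ℕ) : ℝ :=
  ∑ k ∈ Finset.range m, binomWeight p K k

theorem binomWeight_nonneg {p : ℝ} (hp0 : 0 ≤ p) (hp1 : p ≤ 1) (K k : ℕ) :
    0 ≤ binomWeight p K k := by
  have : 0 ≤ 1 - p := by linarith
  unfold binomWeight
  positivity

theorem binomWeight_succ_zero (p : ℝ) (K : ℕ) :
    binomWeight p (K + 1) 0 = (1 - p) * binomWeight p K 0 := by
  simp [binomWeight, pow_succ, mul_comm]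

theorem binomWeight_succ_succ (p : ℝ) (K k : ℕ) :
    binomWeight p (K + 1) (k + 1) =
      p * binomWeight p K k + (1 - p) * binomWeight p K (k + 1) := by
  unfold binomWeight
  rw [Nat.choose_succ_succ, Nat.add_sub_add_right]
  rcases Nat.lt_or_ge k K with h | h
  · obtain ⟨j, rfl⟩ := Nat.exists_eq_add_of_lt h
    have h1 : k + j + 1 - k = j + 1 := by omega
    have h2 : k + j + 1 - (k + 1) = j := by omega
    rw [h1, h2]
    push_cast
    ring
  · -- Here `K - (k + 1)` truncates, but its coefficient `C(K, k+1)` vanishes.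
    rw [Nat.choose_eq_zero_of_lt (show K < k + 1 by omega)]
    push_cast
    ring

theorem lowerTail_zero_right (p : ℝ) (K : ℕ) : lowerTail p K 0 = 0 := by
  simp [lowerTail]

/-- Conditioning on the outcome of one trial. -/
theorem lowerTail_succ_succ (p : ℝ) (K m : ℕ) :
    lowerTail p (K + 1) (m + 1) =
      p * lowerTail p K m + (1 - p) * lowerTail p K (m + 1) := by
  unfold lowerTail
  rw [Finset.sum_range_succ', Finset.sum_range_succ' (fun k => binomWeight p K k),
    binomWeight_succ_zero]
  simp only [binomWeight_succ_succ]
  rw [Finset.sum_add_distrib, ← Finset.mul_sum, ← Finset.mul_sum]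
  ring

theorem lowerTail_le_succ_right {p : ℝ} (hp0 : 0 ≤ p) (hp1 : p ≤ 1) (K m : ℕ) :
    lowerTail p K m ≤ lowerTail p K (m + 1) := by
  unfold lowerTail
  rw [Finset.sum_range_succ]
  linarith [binomWeight_nonneg hp0 hp1 K m]

theorem lowerTail_succ_left_le {p : ℝ} (hp0 : 0 ≤ p) (hp1 : p ≤ 1) (K m : ℕ) :
    lowerTail p (K + 1) m ≤ lowerTail p K m := by
  cases m with
  | zero => simp [lowerTail_zero_right]
  | succ m =>
    rw [lowerTail_succ_succ]
    nlinarith [lowerTail_le_succ_right hp0 hp1 K m]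

theorem lowerTail_antitone_left {p : ℝ} (hp0 : 0 ≤ p) (hp1 : p ≤ 1) (m : ℕ) :
    Antitone fun K => lowerTail p K m :=
  antitone_nat_of_succ_le fun K => lowerTail_succ_left_le hp0 hp1 K m

theorem lowerTail_le_one {p : ℝ} (hp0 : 0 ≤ p) (hp1 : p ≤ 1) (K m : ℕ) :
    lowerTail p K m ≤ 1 := by
  refine (lowerTail_antitone_left hp0 hp1 m (Nat.zero_le K)).trans ?_
  cases m with
  | zero => simp [lowerTail_zero_right]
  | succ m => simp [lowerTail, Finset.sum_range_succ', binomWeight]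

/-- Among `K + d` trials, at most `m` successes occur only if the first `K` trials have fewer than
`m` successes or the last `d` trials have none. -/
theorem lowerTail_add_le {p : ℝ} (hp0 : 0 ≤ p) (hp1 : p ≤ 1) (K m d : ℕ) :
    lowerTail p (K + d) (m + 1) ≤ lowerTail p K m + (1 - p) ^ d := by
  induction d with
  | zero =>
    have h0 : 0 ≤ lowerTail p K m :=
      Finset.sum_nonneg fun k _ => binomWeight_nonneg hp0 hp1 K k
    simpa using (lowerTail_le_one hp0 hp1 K (m + 1)).trans (by linarith)
  | succ d ih =>
    rw [← Nat.add_assoc, lowerTail_succ_succ]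
    have h1 : lowerTail p (K + d) m ≤ lowerTail p K m :=
      lowerTail_antitone_left hp0 hp1 m (Nat.le_add_right K d)
    have h2 := mul_le_mul_of_nonneg_left h1 hp0
    have h3 := mul_le_mul_of_nonneg_left ih (sub_nonneg.mpr hp1)
    rw [pow_succ]
    linarith

theorem lowerTail_le {p : ℝ} (hp0 : 0 ≤ p) (hp1 : p ≤ 1) (d m : ℕ) :
    ∀ K : ℕ, m * d ≤ K → lowerTail p K m ≤ m * (1 - p) ^ d := by
  induction m with
  | zero => simp [lowerTail_zero_right]
  | succ m ih =>
    intro K hK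
    rw [Nat.succ_mul] at hK
    obtain ⟨J, rfl⟩ := Nat.exists_eq_add_of_le' (show d ≤ K by omega)
    have h1 := lowerTail_add_le hp0 hp1 J m d
    have h2 := ih J (by omega)
    push_cast
    linarith

/-- If `ξ` is a binomial random variable with `K` trials and success
probability `p ∈ [0,1]`, then for every `m` with `1 ≤ m ≤ K`,
`P(ξ ≥ m) ≥ 1 - m * (1 - p)^⌊K/m⌋`. -/
theorem binomial_tail_lower_bound
    {Ω : Type*} [MeasurableSpace Ω] (μ : MeasureTheory.Measure Ω)
    [MeasureTheory.IsProbabilityMeasure μ]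
    (K : ℕ) (p : ℝ) (hp0 : 0 ≤ p) (hp1 : p ≤ 1)
    (ξ : Ω → ℕ)
    (hbin : ∀ k : ℕ, k ≤ K →
      μ {ω | ξ ω = k} =
        ENNReal.ofReal ((K.choose k : ℝ) * p ^ k * (1 - p) ^ (K - k)))
    (m : ℕ) (hm1 : 1 ≤ m) (hmK : m ≤ K) :
    ENNReal.ofReal (1 - (m : ℝ) * (1 - p) ^ (K / m)) ≤ μ {ω | m ≤ ξ ω} := by
  have hcover : (Set.univ : Set Ω) ⊆
      (⋃ k ∈ Finset.range m, {ω | ξ ω = k}) ∪ {ω | m ≤ ξ ω} := by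
    intro ω _
    rcases Nat.lt_or_ge (ξ ω) m with h | h
    · left
      simpa using h
    · exact Or.inr h
  have hlow : μ (⋃ k ∈ Finset.range m, {ω | ξ ω = k}) ≤ ENNReal.ofReal (lowerTail p K m) := by
    refine (MeasureTheory.measure_biUnion_finset_le _ _).trans ?_
    rw [lowerTail, ENNReal.ofReal_sum_of_nonneg fun k _ => binomWeight_nonneg hp0 hp1 K k]
    refine Finset.sum_le_sum fun k hk => (hbin k ?_).le
    have := Finset.mem_range.mp hk
    omega
  have htail := lowerTail_le hp0 hp1 (K / m) m K (Nat.mul_div_le K m)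
  have hone : 1 ≤ ENNReal.ofReal (m * (1 - p) ^ (K / m)) + μ {ω | m ≤ ξ ω} := by
    rw [← MeasureTheory.measure_univ (μ := μ)]
    refine (MeasureTheory.measure_mono hcover).trans ((MeasureTheory.measure_union_le _ _).trans ?_)
    gcongr
    exact hlow.trans (ENNReal.ofReal_le_ofReal htail)
  have hq : 0 ≤ 1 - p := sub_nonneg.mpr hp1
  rw [ENNReal.ofReal_sub _ (by positivity), ENNReal.ofReal_one]
  exact tsub_le_iff_left.mpr hone
end

section
/- Let m ≥ 1 be a natural number with r₊ ≤ 2^m − 1, let α > 0, and let v : {1,…,K} → I be any sample of items with hit count ξ := |{i : s(v_i) ≥ s(v₊)}| satisfying α·ξ ≥ m. Then the scaled cross-entropy loss of this sample bounds the negative log-NDCG: log(log₂(1 + r₊)) ≤ −s(v₊) + log( exp(s(v₊)) + α·Σ_{i=1}^K exp(s(v_i)) ). -/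
/-!
Since `r₊ + 1 ≤ 2 ^ m`, `log₂ (1 + r₊) ≤ m ≤ α * ξ`. Each of the `ξ` hits contributes at
least `exp (s v₊)` to the sampled sum, so `m * exp (s v₊)` is at most the argument of the logarithm
in the loss; taking logarithms gives the bound.
-/

/-- Let `m ≥ 1` with `r₊ ≤ 2^m - 1`, let `α > 0`, and let
`v : Fin K → I` be any sample with hit count `ξ := |{i : s (v i) ≥ s v₊}|` satisfying
`α * ξ ≥ m`. Then `log (log₂ (1 + r₊)) ≤ -s v₊ + log (exp (s v₊) + α * ∑ i, exp (s (v i)))`. -/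
theorem SCE_bounds_neg_log_NDCG_of_hits
    {I : Type*} [Fintype I] [Nonempty I]
    (s : I → ℝ) (vplus : I)
    (rplus : ℕ) (hr : rplus = ({u : I | s u ≥ s vplus} : Set I).ncard)
    (m : ℕ) (hm : 1 ≤ m) (hrm : rplus ≤ 2 ^ m - 1)
    (α : ℝ) (hα : 0 < α)
    (K : ℕ) (v : Fin K → I)
    (ξ : ℕ) (hξ : ξ = (Finset.univ.filter (fun i : Fin K => s (v i) ≥ s vplus)).card)
    (hhit : (m : ℝ) ≤ α * (ξ : ℝ)) :
    Real.log (Real.logb 2 (1 + (rplus : ℝ))) ≤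
      -s vplus + Real.log (Real.exp (s vplus) + α * ∑ i : Fin K, Real.exp (s (v i))) := by
  -- `v₊` counts towards its own rank, so `log₂ (1 + r₊)` is positive and `log` is monotone at it.
  have hr1 : 1 ≤ rplus := by
    rw [hr, Nat.one_le_iff_ne_zero]
    exact (Set.ncard_pos (Set.toFinite _)).2 ⟨vplus, le_refl (s vplus)⟩ |>.ne'
  have hr1' : (1 : ℝ) ≤ rplus := by exact_mod_cast hr1
  have hlog_pos : 0 < Real.logb 2 (1 + (rplus : ℝ)) :=
    Real.logb_pos (by norm_num) (by linarith)
  have hlog_le : Real.logb 2 (1 + (rplus : ℝ)) ≤ m := by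
    have hpow : 1 + rplus ≤ 2 ^ m := by
      have := Nat.one_le_two_pow (n := m)
      omega
    rw [Real.logb_le_iff_le_rpow (by norm_num) (by linarith), Real.rpow_natCast]
    exact_mod_cast hpow
  have hsum : (ξ : ℝ) * Real.exp (s vplus) ≤ ∑ i : Fin K, Real.exp (s (v i)) := by
    calc (ξ : ℝ) * Real.exp (s vplus)
        = ∑ i : Fin K with s (v i) ≥ s vplus, Real.exp (s vplus) := by
          rw [Finset.sum_const, nsmul_eq_mul, hξ]
      _ ≤ ∑ i : Fin K with s (v i) ≥ s vplus, Real.exp (s (v i)) :=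
          Finset.sum_le_sum fun i hi => Real.exp_le_exp.2 (Finset.mem_filter.1 hi).2
      _ ≤ ∑ i : Fin K, Real.exp (s (v i)) :=
          Finset.sum_le_sum_of_subset_of_nonneg (Finset.filter_subset _ _)
            fun i _ _ => (Real.exp_pos _).le
  have hexp := Real.exp_pos (s vplus)
  have hmul : Real.logb 2 (1 + (rplus : ℝ)) * Real.exp (s vplus) ≤
      Real.exp (s vplus) + α * ∑ i : Fin K, Real.exp (s (v i)) := by
    have h₁ := mul_le_mul_of_nonneg_right (hlog_le.trans hhit) hexp.le
    have h₂ := mul_le_mul_of_nonneg_left hsum hα.le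
    linarith
  have hfinal := Real.log_le_log (mul_pos hlog_pos hexp) hmul
  rw [Real.log_mul hlog_pos.ne' hexp.ne', Real.log_exp] at hfinal
  linarith
end

section
/- Let m ≥ 1 be a natural number with r₊ ≤ 2^m − 1, let α > 0, and let v : {1,…,K} → I be any sample of items with hit count ξ := |{i : s(v_i) ≥ s(v₊)}| satisfying α·ξ ≥ 2^m − 1. Then the scaled cross-entropy loss of this sample bounds the negative log-MRR: log(r₊) ≤ −s(v₊) + log( exp(s(v₊)) + α·Σ_{i=1}^K exp(s(v_i)) ). -/
/-!
Each hit contributes at least `exp (s v₊)` to the sample sum, so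
`α * ∑ i, exp (s (v i)) ≥ α * ξ * exp (s v₊) ≥ (2 ^ m - 1) * exp (s v₊) ≥ r₊ * exp (s v₊)`.
Since `r₊ ≥ 1` (the target counts itself), taking logarithms gives the bound.
-/

/-- Let `m ≥ 1` with `r₊ ≤ 2^m - 1`, let `α > 0`, and let
`v : Fin K → I` be any sample with hit count `ξ := |{i : s (v i) ≥ s v₊}|` satisfying
`α * ξ ≥ 2^m - 1`. Then `log r₊ ≤ -s v₊ + log (exp (s v₊) + α * ∑ i, exp (s (v i)))`. -/
theorem SCE_bounds_neg_log_MRR_of_hits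
    {I : Type*} [Fintype I] [Nonempty I]
    (s : I → ℝ) (vplus : I)
    (rplus : ℕ) (hr : rplus = ({u : I | s u ≥ s vplus} : Set I).ncard)
    (m : ℕ) (hm : 1 ≤ m) (hrm : rplus ≤ 2 ^ m - 1)
    (α : ℝ) (hα : 0 < α)
    (K : ℕ) (v : Fin K → I)
    (ξ : ℕ) (hξ : ξ = (Finset.univ.filter (fun i : Fin K => s (v i) ≥ s vplus)).card)
    (hhit : ((2 ^ m - 1 : ℕ) : ℝ) ≤ α * (ξ : ℝ)) :
    Real.log (rplus : ℝ) ≤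
      -s vplus + Real.log (Real.exp (s vplus) + α * ∑ i : Fin K, Real.exp (s (v i))) := by
  have hrpos : 0 < rplus := by
    rw [hr, Set.ncard_pos (Set.toFinite _)]
    exact ⟨vplus, le_refl (s vplus)⟩
  have hrpos' : (0 : ℝ) < rplus := by exact_mod_cast hrpos
  have hsum : (ξ : ℝ) * Real.exp (s vplus) ≤ ∑ i : Fin K, Real.exp (s (v i)) := by
    rw [hξ, ← nsmul_eq_mul]
    refine (Finset.card_nsmul_le_sum _ (fun i => Real.exp (s (v i))) _ fun i hi => ?_).trans
      (Finset.sum_le_sum_of_subset_of_nonneg (Finset.filter_subset _ _)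
        fun i _ _ => (Real.exp_pos _).le)
    exact Real.exp_le_exp.mpr (Finset.mem_filter.mp hi).2
  have hrξ : (rplus : ℝ) ≤ α * ξ := le_trans (by exact_mod_cast hrm) hhit
  have hkey : (rplus : ℝ) * Real.exp (s vplus) ≤
      Real.exp (s vplus) + α * ∑ i : Fin K, Real.exp (s (v i)) := by
    have h₁ := mul_le_mul_of_nonneg_right hrξ (Real.exp_pos (s vplus)).le
    have h₂ := mul_le_mul_of_nonneg_left hsum hα.le
    linarith [Real.exp_pos (s vplus)]
  have hlog := Real.log_le_log (mul_pos hrpos' (Real.exp_pos _)) hkey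
  rw [Real.log_mul hrpos'.ne' (Real.exp_pos _).ne', Real.log_exp] at hlog
  linarith
end

section
/- Let m ≥ 1 be a natural number with r₊ ≤ 2^m − 1, and suppose K items V₁,…,V_K are sampled independently and uniformly from I. Then, with probability at least 1 − m·(1 − r₊/|I|)^{⌊K/m⌋} over the sample, the sampled softmax loss bounds the negative log-NDCG: log(log₂(1 + r₊)) ≤ ℓ_SSM, where ℓ_SSM := −s(v₊) + log( exp(s(v₊)) + Σ_{i=1}^K exp(s(V_i)) ). -/
/-!
Put `q = ⌊K/m⌋` and call an item a hit if its score is at least `s v₊`; a uniform item is a hit with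
probability `r₊/|I|`. Split the first `m * q` sample positions into `m` disjoint blocks of length
`q`. A fixed block contains no hit with probability `(1 - r₊/|I|)^q` (`block_miss_le`), so by the
union bound every block contains a hit with at least the claimed probability. In that case at least
`m` of the sampled items are hits, whence the loss is at least `log m`, while
`log₂ (1 + r₊) ≤ log₂ 2^m = m` (`loss_bound_of_hits`).
-/

open MeasureTheory

/-- The `j`-th block of positions, those `i` with `i / q = j`, avoids the hit set `A` with
probability at most (in fact exactly) `p ^ q`, where `p` is the probability of `Aᶜ`. -/
lemma block_miss_le {I : Type*} [MeasurableSpace I] (ν : Measure I) [IsProbabilityMeasure ν]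
    (A : Set I) {K q m j : ℕ} (hq : 0 < q) (hmq : m * q ≤ K) (hj : j < m) :
    Measure.pi (fun _ : Fin K => ν) {V | ∀ i : Fin K, (i : ℕ) / q = j → V i ∉ A}
      ≤ ν Aᶜ ^ q := by
  classical
  have hset : {V : Fin K → I | ∀ i : Fin K, (i : ℕ) / q = j → V i ∉ A}
      = Set.pi Set.univ (fun i : Fin K => if (i : ℕ) / q = j then Aᶜ else Set.univ) := by
    ext V
    simp only [Set.mem_ofPred_eq, Set.mem_pi, Set.mem_univ, true_implies]
    refine forall_congr' fun i => ?_
    split_ifs with h <;> simp [h]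
  have hcard : q ≤ (Finset.univ.filter (fun i : Fin K => (i : ℕ) / q = j)).card := by
    have hlt : ∀ t : Fin q, j * q + t < K := fun t => by
      have h1 : (j + 1) * q ≤ m * q := Nat.mul_le_mul_right q hj
      have h2 := t.2
      rw [add_mul, one_mul] at h1
      omega
    have := Finset.card_le_card_of_injOn (s := (Finset.univ : Finset (Fin q)))
      (t := Finset.univ.filter (fun i : Fin K => (i : ℕ) / q = j))
      (fun t => (⟨j * q + t, hlt t⟩ : Fin K))
      (fun t _ => by
        simp only [Finset.coe_filter, Finset.mem_univ, true_and, Set.mem_ofPred_eq]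
        rw [mul_comm, Nat.mul_add_div hq, Nat.div_eq_of_lt t.2, add_zero])
      (fun a _ b _ hab => by
        simp only [Fin.mk.injEq] at hab
        exact Fin.ext (by omega))
    simpa using this
  rw [hset, Measure.pi_pi]
  calc ∏ i : Fin K, ν (if (i : ℕ) / q = j then Aᶜ else Set.univ)
      = ∏ i : Fin K, if (i : ℕ) / q = j then ν Aᶜ else 1 := by
        refine Finset.prod_congr rfl fun i _ => ?_
        split_ifs <;> simp
    _ = ν Aᶜ ^ (Finset.univ.filter (fun i : Fin K => (i : ℕ) / q = j)).card := by
        rw [← Finset.prod_filter, Finset.prod_const]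
    _ ≤ ν Aᶜ ^ q := pow_le_pow_right_of_le_one' prob_le_one hcard

/-- The deterministic part: `m` distinct hits force the loss above `log m ≥ log (log₂ (1 + r))`. -/
lemma loss_bound_of_hits {K m r : ℕ} (hr : 1 ≤ r) (hrm : r ≤ 2 ^ m - 1) (c : ℝ) (x : Fin K → ℝ)
    (f : Fin m → Fin K) (hf : Function.Injective f) (hx : ∀ j, c ≤ x (f j)) :
    Real.log (Real.logb 2 (1 + (r : ℝ))) ≤
      -c + Real.log (Real.exp c + ∑ i, Real.exp (x i)) := by
  have hr1 : (1 : ℝ) ≤ r := by exact_mod_cast hr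
  have hpos : 0 < Real.logb 2 (1 + (r : ℝ)) := Real.logb_pos (by norm_num) (by linarith)
  have hle : Real.logb 2 (1 + (r : ℝ)) ≤ m := by
    rw [Real.logb_le_iff_le_rpow (by norm_num) (by linarith), Real.rpow_natCast]
    have : 1 + r ≤ 2 ^ m := by have := Nat.one_le_two_pow (n := m); omega
    exact_mod_cast this
  have hm0 : (0 : ℝ) < m := hpos.trans_le hle
  have hsum : (m : ℝ) * Real.exp c ≤ ∑ i, Real.exp (x i) := by
    calc (m : ℝ) * Real.exp c = ∑ _j : Fin m, Real.exp c := by simp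
      _ ≤ ∑ j : Fin m, Real.exp (x (f j)) :=
        Finset.sum_le_sum fun j _ => Real.exp_le_exp.2 (hx j)
      _ = ∑ i ∈ Finset.univ.map ⟨f, hf⟩, Real.exp (x i) := by simp
      _ ≤ ∑ i, Real.exp (x i) :=
        Finset.sum_le_sum_of_subset_of_nonneg (Finset.subset_univ _)
          fun i _ _ => (Real.exp_pos _).le
  calc Real.log (Real.logb 2 (1 + (r : ℝ))) ≤ Real.log m := Real.log_le_log hpos hle
    _ = -c + Real.log (m * Real.exp c) := by
      rw [Real.log_mul hm0.ne' (Real.exp_pos c).ne', Real.log_exp]; ring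
    _ ≤ -c + Real.log (Real.exp c + ∑ i, Real.exp (x i)) := by
      have := Real.exp_pos c
      gcongr
      linarith

lemma uniform_compl_apply {I : Type*} [Fintype I] [Nonempty I]
    [MeasurableSpace I] [MeasurableSingletonClass I] (A : Set I) :
    (PMF.uniformOfFintype I).toMeasure Aᶜ
      = ENNReal.ofReal (1 - (A.ncard : ℝ) / (Fintype.card I : ℝ)) := by
  classical
  have hA : MeasurableSet A := A.toFinite.measurableSet
  have hn : (0 : ℝ) < Fintype.card I := by exact_mod_cast Fintype.card_pos
  rw [prob_compl_eq_one_sub hA, PMF.toMeasure_uniformOfFintype_apply _ hA,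
    ← Nat.card_eq_fintype_card, Nat.card_coe_set_eq,
    ENNReal.ofReal_sub _ (by positivity), ENNReal.ofReal_one, ENNReal.ofReal_div_of_pos hn,
    ENNReal.ofReal_natCast, ENNReal.ofReal_natCast]


/-- Let `m ≥ 1` with `r₊ ≤ 2^m - 1`, and let `K` items be sampled
independently and uniformly from `I`. Then with probability at least
`1 - m * (1 - r₊/|I|)^⌊K/m⌋` over the sample,
`log (log₂ (1 + r₊)) ≤ ℓ_SSM = -s v₊ + log (exp (s v₊) + ∑ i, exp (s (V i)))`. -/
theorem SSM_bounds_neg_log_NDCG_whp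
    {I : Type*} [Fintype I] [Nonempty I]
    [MeasurableSpace I] [MeasurableSingletonClass I]
    (s : I → ℝ) (vplus : I)
    (rplus : ℕ) (hr : rplus = ({u : I | s u ≥ s vplus} : Set I).ncard)
    (m : ℕ) (hm : 1 ≤ m) (hrm : rplus ≤ 2 ^ m - 1)
    (K : ℕ) :
    ENNReal.ofReal
        (1 - (m : ℝ) * (1 - (rplus : ℝ) / (Fintype.card I : ℝ)) ^ (K / m)) ≤
      MeasureTheory.Measure.pi
        (fun _ : Fin K => (PMF.uniformOfFintype I).toMeasure)
        {V : Fin K → I |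
          Real.log (Real.logb 2 (1 + (rplus : ℝ))) ≤
            -s vplus +
              Real.log (Real.exp (s vplus) + ∑ i : Fin K, Real.exp (s (V i)))} := by
  have hn : (0 : ℝ) < Fintype.card I := by exact_mod_cast Fintype.card_pos
  set A : Set I := {u : I | s u ≥ s vplus} with hA
  set q := K / m with hq
  have hr1 : 1 ≤ rplus := by
    rw [hr, Nat.one_le_iff_ne_zero, ← Nat.pos_iff_ne_zero, Set.ncard_pos]
    exact ⟨vplus, le_refl (s vplus)⟩
  have hp : (0 : ℝ) ≤ 1 - (rplus : ℝ) / (Fintype.card I : ℝ) := by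
    rw [sub_nonneg, div_le_one hn, hr, ← Nat.card_eq_fintype_card]
    exact_mod_cast Set.ncard_le_card A
  rcases Nat.eq_zero_or_pos q with hq0 | hq0
  -- If `q = 0`, the blocks are empty, and the claimed lower bound `1 - m` is not positive.
  · have hm_one : (1 : ℝ) ≤ m := by exact_mod_cast hm
    rw [hq0, ENNReal.ofReal_of_nonpos (by simpa using hm_one)]
    exact zero_le
  set ν := (PMF.uniformOfFintype I).toMeasure with hν
  set μ := Measure.pi (fun _ : Fin K => ν) with hμ
  set G : Set (Fin K → I) := {V : Fin K → I |
    Real.log (Real.logb 2 (1 + (rplus : ℝ))) ≤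
      -s vplus + Real.log (Real.exp (s vplus) + ∑ i : Fin K, Real.exp (s (V i)))} with hG
  have hmq : m * q ≤ K := Nat.mul_div_le K m
  have hsub : Gᶜ ⊆ ⋃ j : Fin m, {V : Fin K → I | ∀ i : Fin K, (i : ℕ) / q = j → V i ∉ A} := by
    intro V hV
    by_contra hcon
    simp only [Set.mem_iUnion, Set.mem_ofPred_eq, not_exists, not_forall, not_not] at hcon
    choose f hfj hfA using hcon
    refine hV (loss_bound_of_hits hr1 hrm (s vplus) (fun i => s (V i)) f ?_ hfA)
    intro a b hab
    exact Fin.ext (by rw [← hfj a, ← hfj b, hab])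
  have hbad : μ Gᶜ ≤ ENNReal.ofReal
      ((m : ℝ) * (1 - (rplus : ℝ) / (Fintype.card I : ℝ)) ^ q) := by
    calc μ Gᶜ ≤ ∑ j : Fin m, μ {V | ∀ i : Fin K, (i : ℕ) / q = j → V i ∉ A} :=
          (measure_mono hsub).trans (measure_iUnion_fintype_le _ _)
      _ ≤ ∑ _j : Fin m, ν Aᶜ ^ q :=
          Finset.sum_le_sum fun j _ => block_miss_le ν A hq0 hmq j.2
      _ = _ := by
          rw [Finset.sum_const, Finset.card_univ, Fintype.card_fin, nsmul_eq_mul, hν,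
            uniform_compl_apply, ← hr, ENNReal.ofReal_mul (by positivity),
            ENNReal.ofReal_pow hp, ENNReal.ofReal_natCast]
  rw [ENNReal.ofReal_sub _ (by positivity), ENNReal.ofReal_one, tsub_le_iff_right]
  calc (1 : ENNReal) = μ Set.univ := measure_univ.symm
    _ ≤ μ G + μ Gᶜ := by rw [← Set.union_compl_self G]; exact measure_union_le _ _
    _ ≤ _ := by gcongr
end

section
/- Let m ≥ 1 be a natural number with r₊ ≤ 2^m − 1, and suppose K items V₁,…,V_K are sampled independently and uniformly from I. Then, with probability at least 1 − 2^m·(1 − r₊/|I|)^{⌊K/2^m⌋} over the sample, the sampled softmax loss bounds the negative log-MRR: log(r₊) ≤ ℓ_SSM, where ℓ_SSM := −s(v₊) + log( exp(s(v₊)) + Σ_{i=1}^K exp(s(V_i)) ). -/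
/-!
Only `r₊ - 1 < 2 ^ m` sampled items scoring at least `s v₊` are needed: each contributes at least
`exp (s v₊)` to the softmax denominator. Choose `2 ^ m` disjoint blocks of `⌊K / 2 ^ m⌋` sample
positions. A given block misses the set `{u | s u ≥ s v₊}` with probability
`(1 - r₊ / |I|) ^ ⌊K / 2 ^ m⌋`, so by the union bound (`one_sub_le_pi_forall_block_hit`) every
block hits it except with probability at most `2 ^ m` times that. If every block hits, the
denominator is at least `(1 + 2 ^ m) * exp (s v₊) ≥ r₊ * exp (s v₊)` (`log_le_of_block_hit`).
-/

open MeasureTheory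

/-- The blocks are encoded by an injection `f : J × T → ι`, block `j` being `f (j, ·)`.
Under a product measure, the probability that some block misses `S` is bounded by the union
bound. -/
lemma one_sub_le_pi_forall_block_hit {I ι J T : Type*} [MeasurableSpace I] [Fintype ι]
    [Fintype J] [Fintype T] (μ : Measure I) [IsProbabilityMeasure μ] {S : Set I}
    (hS : MeasurableSet S) (f : J × T ↪ ι) :
    1 - (Fintype.card J : ℝ) * μ.real Sᶜ ^ Fintype.card T ≤
      (Measure.pi (fun _ : ι => μ)).real {V : ι → I | ∀ j, ∃ t, V (f (j, t)) ∈ S} := by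
  classical
  set P := Measure.pi (fun _ : ι => μ) with hP
  -- the event that block `j` misses `S`, written as a box
  let B : J → Set (ι → I) := fun j =>
    Set.pi Set.univ (fun i => if ∃ t, f (j, t) = i then Sᶜ else Set.univ)
  have hB : ∀ j, P.real (B j) = μ.real Sᶜ ^ Fintype.card T := by
    intro j
    have hcard : (Finset.univ.filter (fun i : ι => ∃ t, f (j, t) = i)).card = Fintype.card T := by
      have : Finset.univ.filter (fun i : ι => ∃ t, f (j, t) = i)
          = Finset.univ.image (fun t => f (j, t)) := by
        ext i; simp
      rw [this, Finset.card_image_of_injective, Finset.card_univ]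
      intro a b hab
      simpa using hab
    have h1 : P (B j) = μ Sᶜ ^ Fintype.card T := by
      rw [hP, Measure.pi_pi, ← hcard, ← Finset.prod_const, Finset.prod_filter]
      refine Finset.prod_congr rfl fun i _ => ?_
      split_ifs <;> simp
    rw [measureReal_def, h1, ENNReal.toReal_pow, measureReal_def]
  have hcompl : {V : ι → I | ∀ j, ∃ t, V (f (j, t)) ∈ S} = (⋃ j, B j)ᶜ := by
    ext V
    simp only [Set.mem_ofPred_eq, Set.mem_compl_iff, Set.mem_iUnion, not_exists]
    refine forall_congr' fun j => ?_
    rw [← not_iff_not, not_not]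
    simp only [B, Set.mem_univ_pi, not_exists]
    constructor
    · intro h i
      split_ifs with hi
      · obtain ⟨t, rfl⟩ := hi
        exact h t
      · trivial
    · intro h t
      have := h (f (j, t))
      rwa [if_pos ⟨t, rfl⟩] at this
  have hmeas : MeasurableSet (⋃ j, B j) := by
    refine MeasurableSet.iUnion fun j => MeasurableSet.univ_pi fun i => ?_
    split_ifs
    · exact hS.compl
    · exact MeasurableSet.univ
  have hunion : P.real (⋃ j, B j) ≤ Fintype.card J * μ.real Sᶜ ^ Fintype.card T := by
    refine (measureReal_iUnion_fintype_le B).trans ?_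
    simp [hB]
  rw [hcompl, probReal_compl_eq_one_sub hmeas]
  linarith

/-- If each of `N` disjoint blocks of positions contains an item scoring at least `a`, then the
softmax loss relative to the score `a` is at least `log r` for every `1 ≤ r ≤ N + 1`. -/
lemma log_le_of_block_hit {ι J T : Type*} [Fintype ι] [Fintype J] (f : J × T ↪ ι)
    (x : ι → ℝ) (a : ℝ) (h : ∀ j, ∃ t, a ≤ x (f (j, t))) (r : ℕ) (hr0 : 0 < r)
    (hr : r ≤ Fintype.card J + 1) :
    Real.log r ≤ -a + Real.log (Real.exp a + ∑ i, Real.exp (x i)) := by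
  choose t ht using h
  let g : J ↪ ι := ⟨fun j => f (j, t j), fun j k hjk => (Prod.mk.inj (f.injective hjk)).1⟩
  have h1 : (Fintype.card J : ℝ) * Real.exp a ≤ ∑ i, Real.exp (x i) := calc
    (Fintype.card J : ℝ) * Real.exp a = ∑ _j : J, Real.exp a := by simp
    _ ≤ ∑ j, Real.exp (x (g j)) := Finset.sum_le_sum fun j _ => Real.exp_le_exp.2 (ht j)
    _ = ∑ i ∈ Finset.univ.map g, Real.exp (x i) := by rw [Finset.sum_map]
    _ ≤ ∑ i, Real.exp (x i) := Finset.sum_le_sum_of_subset_of_nonneg (Finset.subset_univ _)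
        fun _ _ _ => (Real.exp_pos _).le
  have hr0' : (0 : ℝ) < r := by exact_mod_cast hr0
  have hr' : (r : ℝ) ≤ Fintype.card J + 1 := by exact_mod_cast hr
  have h2 : (r : ℝ) * Real.exp a ≤ Real.exp a + ∑ i, Real.exp (x i) := by
    nlinarith [mul_le_mul_of_nonneg_right hr' (Real.exp_pos a).le]
  have h3 := Real.log_le_log (mul_pos hr0' (Real.exp_pos a)) h2
  rw [Real.log_mul hr0'.ne' (Real.exp_pos a).ne', Real.log_exp] at h3
  linarith

/-- Let `m ≥ 1` with `r₊ ≤ 2^m - 1`, and let `K` items be sampled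
independently and uniformly from `I`. Then with probability at least
`1 - 2^m * (1 - r₊/|I|)^⌊K/2^m⌋` over the sample,
`log r₊ ≤ ℓ_SSM = -s v₊ + log (exp (s v₊) + ∑ i, exp (s (V i)))`. -/
theorem SSM_bounds_neg_log_MRR_whp
    {I : Type*} [Fintype I] [Nonempty I]
    [MeasurableSpace I] [MeasurableSingletonClass I]
    (s : I → ℝ) (vplus : I)
    (rplus : ℕ) (hr : rplus = ({u : I | s u ≥ s vplus} : Set I).ncard)
    (m : ℕ) (hm : 1 ≤ m) (hrm : rplus ≤ 2 ^ m - 1)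
    (K : ℕ) :
    ENNReal.ofReal
        (1 - ((2 ^ m : ℕ) : ℝ) *
          (1 - (rplus : ℝ) / (Fintype.card I : ℝ)) ^ (K / 2 ^ m)) ≤
      MeasureTheory.Measure.pi
        (fun _ : Fin K => (PMF.uniformOfFintype I).toMeasure)
        {V : Fin K → I |
          Real.log (rplus : ℝ) ≤
            -s vplus +
              Real.log (Real.exp (s vplus) + ∑ i : Fin K, Real.exp (s (V i)))} := by

  classical
  set S : Set I := {u : I | s u ≥ s vplus} with hSdef
  have hS : MeasurableSet S := S.toFinite.measurableSet
  have hr0 : 0 < rplus := by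
    rw [hr, Set.ncard_pos]
    exact ⟨vplus, le_refl (s vplus)⟩
  set μ := (PMF.uniformOfFintype I).toMeasure with hμ
  have hμS : μ.real Sᶜ = 1 - (rplus : ℝ) / (Fintype.card I : ℝ) := by
    rw [probReal_compl_eq_one_sub hS, measureReal_def, hμ,
      PMF.toMeasure_uniformOfFintype_apply S hS, hr, Set.ncard_eq_toFinset_card',
      Set.toFinset_card]
    simp
  let f : Fin (2 ^ m) × Fin (K / 2 ^ m) ↪ Fin K :=
    finProdFinEquiv.toEmbedding.trans (Fin.castLEEmb (Nat.mul_div_le K (2 ^ m)))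
  have key := one_sub_le_pi_forall_block_hit μ hS f
  rw [hμS, Fintype.card_fin, Fintype.card_fin] at key
  refine ENNReal.ofReal_le_of_le_toReal (key.trans ?_)
  refine measureReal_mono fun V hV => ?_
  refine log_le_of_block_hit f (fun i => s (V i)) (s vplus) hV rplus hr0 ?_
  rw [Fintype.card_fin]
  omega
end

section
/- Let m ≥ 1 be a natural number with r₊ ≤ 2^m − 1, let α ≥ 1 be a real scaling weight, and suppose K items V₁,…,V_K are sampled independently and uniformly from I. Then, with probability at least 1 − ⌈m/α⌉·(1 − r₊/|I|)^{⌊K/⌈m/α⌉⌋} over the sample, the scaled cross-entropy loss bounds the negative log-NDCG: log(log₂(1 + r₊)) ≤ ℓ_SCE(α), where ℓ_SCE(α) := −s(v₊) + log( exp(s(v₊)) + α·Σ_{i=1}^K exp(s(V_i)) ). -/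
/-!
Put `n = ⌈m/α⌉` and `q = ⌊K/n⌋`, and split the first `n * q` sample positions into `n` disjoint
blocks of length `q`. A given block misses the set `T = {u | s u ≥ s v₊}` entirely with probability
`(1 - r₊/|I|)^q`, so by the union bound every block hits `T` with probability at least
`1 - n (1 - r₊/|I|)^q`. If every block hits `T`, then `n` distinct positions have score at least
`s v₊`, hence `exp (s v₊) + α ∑ exp (s (V i)) ≥ α n exp (s v₊) ≥ m exp (s v₊)`, while
`log₂ (1 + r₊) ≤ m` because `r₊ ≤ 2^m - 1`. Taking logarithms gives the bound.
-/

open MeasureTheory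

/-- The `b`-th block of positions is `{i | i / q = b}`. For `b < n` it contains
`b * q, …, b * q + q - 1`, all of which are below `n * q ≤ K`. -/
lemma card_block_ge {K n q b : ℕ} (hq : n * q ≤ K) (hb : b < n) :
    q ≤ (Finset.univ.filter (fun i : Fin K => (i : ℕ) / q = b)).card := by
  have hlt : ∀ j : Fin q, b * q + j < K := fun j => by
    have h1 : (b + 1) * q ≤ n * q := Nat.mul_le_mul_right q hb
    have h2 := j.2
    nlinarith
  have := Finset.card_le_card_of_injOn (s := (Finset.univ : Finset (Fin q)))
    (t := Finset.univ.filter (fun i : Fin K => (i : ℕ) / q = b))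
    (fun j => ⟨b * q + j, hlt j⟩)
    (fun j _ => by
      have hq0 : 0 < q := j.pos
      simp only [Finset.coe_filter, Finset.mem_univ, true_and, Set.mem_ofPred_eq]
      rw [Nat.add_comm, Nat.add_mul_div_right _ _ hq0, Nat.div_eq_of_lt j.2, zero_add])
    (fun j _ k _ h => by
      have : b * q + (j : ℕ) = b * q + k := by simpa using h
      exact Fin.ext (by omega))
  simpa using this

/-- The probability that an entire block of `q` positions misses `T` is at most `P(Tᶜ) ^ q`. -/
lemma measure_block_miss_le {I : Type*} [MeasurableSpace I] (ν : Measure I)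
    [IsProbabilityMeasure ν] (T : Set I) {K n q b : ℕ} (hq : n * q ≤ K) (hb : b < n) :
    Measure.pi (fun _ : Fin K => ν) {V | ∀ i : Fin K, (i : ℕ) / q = b → V i ∉ T} ≤ ν Tᶜ ^ q := by
  have hset : {V : Fin K → I | ∀ i : Fin K, (i : ℕ) / q = b → V i ∉ T} =
      Set.univ.pi (fun i : Fin K => if (i : ℕ) / q = b then Tᶜ else Set.univ) := by
    ext V
    simp only [Set.mem_ofPred_eq, Set.mem_pi, Set.mem_univ, true_imp_iff]
    refine forall_congr' fun i => ?_
    split_ifs with h <;> simp [h]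
  rw [hset, Measure.pi_pi]
  simp only [apply_ite ν, measure_univ]
  rw [Finset.prod_ite, Finset.prod_const, Finset.prod_const_one, mul_one]
  exact pow_le_pow_right_of_le_one' prob_le_one (card_block_ge hq hb)

/-- If each of the `n` blocks contains a position where `f ≥ c`, then `f` sums to at least `n * c`:
positions in different blocks are distinct. -/
lemma sum_ge_of_blocks {K n q : ℕ} (f : Fin K → ℝ) (hf : ∀ i, 0 ≤ f i) (c : ℝ)
    (h : ∀ b < n, ∃ i : Fin K, (i : ℕ) / q = b ∧ c ≤ f i) : n * c ≤ ∑ i, f i := by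
  choose g hg hgc using fun b : Fin n => h b b.2
  have hinj : Function.Injective g := fun a b hab => Fin.ext (by rw [← hg a, ← hg b, hab])
  calc (n : ℝ) * c = ∑ _b : Fin n, c := by simp
    _ ≤ ∑ b : Fin n, f (g b) := Finset.sum_le_sum fun b _ => hgc b
    _ = ∑ i ∈ Finset.univ.map ⟨g, hinj⟩, f i := by simp
    _ ≤ ∑ i, f i := Finset.sum_le_sum_of_subset_of_nonneg (Finset.subset_univ _)
        fun i _ _ => hf i

lemma uniform_compl {I : Type*} [Fintype I] [Nonempty I] [MeasurableSpace I]
    [MeasurableSingletonClass I] (T : Set I) :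
    (PMF.uniformOfFintype I).toMeasure Tᶜ =
      ENNReal.ofReal (1 - (T.ncard : ℝ) / (Fintype.card I : ℝ)) := by
  classical
  have hI : (0 : ℝ) < Fintype.card I := by exact_mod_cast Fintype.card_pos
  rw [prob_compl_eq_one_sub (Set.toFinite T).measurableSet,
    PMF.toMeasure_uniformOfFintype_apply T (Set.toFinite T).measurableSet,
    ENNReal.ofReal_sub _ (by positivity), ENNReal.ofReal_one, ENNReal.ofReal_div_of_pos hI,
    ENNReal.ofReal_natCast, ENNReal.ofReal_natCast, ← Nat.card_coe_set_eq, Nat.card_eq_fintype_card]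

/-- Let `m ≥ 1` with `r₊ ≤ 2^m - 1`, let `α ≥ 1`, and let `K` items be
sampled independently and uniformly from `I`. Then with probability at least
`1 - ⌈m/α⌉ * (1 - r₊/|I|)^⌊K/⌈m/α⌉⌋` over the sample,
`log (log₂ (1 + r₊)) ≤ ℓ_SCE(α) = -s v₊ + log (exp (s v₊) + α * ∑ i, exp (s (V i)))`. -/
theorem SCE_bounds_neg_log_NDCG_whp
    {I : Type*} [Fintype I] [Nonempty I]
    [MeasurableSpace I] [MeasurableSingletonClass I]
    (s : I → ℝ) (vplus : I)
    (rplus : ℕ) (hr : rplus = ({u : I | s u ≥ s vplus} : Set I).ncard)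
    (m : ℕ) (hm : 1 ≤ m) (hrm : rplus ≤ 2 ^ m - 1)
    (α : ℝ) (hα : 1 ≤ α)
    (K : ℕ) :
    ENNReal.ofReal
        (1 - (⌈(m : ℝ) / α⌉₊ : ℝ) *
          (1 - (rplus : ℝ) / (Fintype.card I : ℝ)) ^ (K / ⌈(m : ℝ) / α⌉₊)) ≤
      MeasureTheory.Measure.pi
        (fun _ : Fin K => (PMF.uniformOfFintype I).toMeasure)
        {V : Fin K → I |
          Real.log (Real.logb 2 (1 + (rplus : ℝ))) ≤
            -s vplus +
              Real.log (Real.exp (s vplus) + α * ∑ i : Fin K, Real.exp (s (V i)))} := by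
  set n := ⌈(m : ℝ) / α⌉₊ with hn
  set q := K / n with hqdef
  set T : Set I := {u : I | s u ≥ s vplus} with hT
  have hq : n * q ≤ K := Nat.mul_div_le K n
  set ν := (PMF.uniformOfFintype I).toMeasure
  set μ := Measure.pi (fun _ : Fin K => ν)
  have hc : 0 ≤ 1 - (rplus : ℝ) / (Fintype.card I : ℝ) := by
    have hle : rplus ≤ Fintype.card I := by
      rw [hr, ← Nat.card_eq_fintype_card]
      exact Set.ncard_le_card T
    have : (rplus : ℝ) / (Fintype.card I : ℝ) ≤ 1 :=
      div_le_one_of_le₀ (by exact_mod_cast hle) (by positivity)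
    linarith
  have hν : ν Tᶜ = ENNReal.ofReal (1 - (rplus : ℝ) / (Fintype.card I : ℝ)) := by
    rw [hr]; exact uniform_compl T
  have hr1 : 1 ≤ rplus := by
    rw [hr]
    exact (Set.ncard_pos (Set.toFinite T)).2 ⟨vplus, le_refl (s vplus)⟩
  have hlog_pos : 0 < Real.logb 2 (1 + (rplus : ℝ)) :=
    Real.logb_pos (by norm_num) (by have : (1 : ℝ) ≤ rplus := by exact_mod_cast hr1
                                    linarith)
  have hlog_le : Real.logb 2 (1 + (rplus : ℝ)) ≤ m := by
    rw [Real.logb_le_iff_le_rpow (by norm_num) (by positivity), Real.rpow_natCast]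
    have h1 : 1 + rplus ≤ 2 ^ m := by
      have := Nat.one_le_two_pow (n := m)
      omega
    exact_mod_cast h1
  have hmn : (m : ℝ) ≤ α * n := by
    have := Nat.le_ceil ((m : ℝ) / α)
    rw [div_le_iff₀ (by linarith)] at this
    linarith
  set G : Set (Fin K → I) := {V : Fin K → I |
          Real.log (Real.logb 2 (1 + (rplus : ℝ))) ≤
            -s vplus +
              Real.log (Real.exp (s vplus) + α * ∑ i : Fin K, Real.exp (s (V i)))} with hG
  have hcover : (Set.univ : Set (Fin K → I)) ⊆
      G ∪ ⋃ b ∈ Finset.range n, {V | ∀ i : Fin K, (i : ℕ) / q = b → V i ∉ T} := by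
    intro V _
    by_contra hV
    simp only [Set.mem_union, Set.mem_iUnion, Finset.mem_range, Set.mem_ofPred_eq, not_or,
      not_exists, exists_prop] at hV
    obtain ⟨hVG, hhit⟩ := hV
    apply hVG
    have hsum := sum_ge_of_blocks (q := q) (n := n) (fun i => Real.exp (s (V i)))
      (fun i => (Real.exp_pos _).le) (Real.exp (s vplus)) (fun b hb => by
        by_contra! hmiss
        refine hhit b ⟨hb, fun i hi hiT => ?_⟩
        exact (hmiss i hi).not_ge (Real.exp_le_exp.2 hiT))
    have hexp := Real.exp_pos (s vplus)
    have hle : Real.exp (s vplus) * Real.logb 2 (1 + (rplus : ℝ)) ≤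
        Real.exp (s vplus) + α * ∑ i : Fin K, Real.exp (s (V i)) := by
      calc Real.exp (s vplus) * Real.logb 2 (1 + (rplus : ℝ))
          ≤ Real.exp (s vplus) * (α * n) := by gcongr; linarith
        _ = α * (n * Real.exp (s vplus)) := by ring
        _ ≤ α * ∑ i : Fin K, Real.exp (s (V i)) := by gcongr
        _ ≤ _ := by linarith
    have := Real.log_le_log (by positivity) hle
    rw [Real.log_mul hexp.ne' hlog_pos.ne', Real.log_exp] at this
    rw [hG, Set.mem_ofPred_eq]
    linarith
  have hunion : 1 ≤ μ G + n * ν Tᶜ ^ q := by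
    calc (1 : ENNReal) = μ Set.univ := measure_univ.symm
      _ ≤ μ G + ∑ b ∈ Finset.range n, μ {V | ∀ i : Fin K, (i : ℕ) / q = b → V i ∉ T} :=
        (measure_mono hcover).trans <| (measure_union_le _ _).trans <| by
          gcongr
          exact measure_biUnion_finset_le _ _
      _ ≤ μ G + ∑ b ∈ Finset.range n, ν Tᶜ ^ q := by
        gcongr with b hb
        exact measure_block_miss_le ν T hq (Finset.mem_range.1 hb)
      _ = _ := by simp
  rw [ENNReal.ofReal_sub _ (by positivity), ENNReal.ofReal_one,
    ENNReal.ofReal_mul (by positivity), ENNReal.ofReal_natCast, ENNReal.ofReal_pow hc, ← hν]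
  exact tsub_le_iff_right.2 hunion
end
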